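/- Euler–Lagrange (geodesic) equation for the space coordinate from criticality: let t, x : ℝ → ℝ be twice continuously differentiable, let V : ℝ → ℝ be continuously differentiable, and let c, m ∈ ℝ with m ≠ 0. Suppose that for every smooth function η : ℝ → ℝ with compact support contained in the open interval (γ_i, γ_f), the derivative at ε = 0 of ε ↦ ∫_{γ_i}^{γ_f} (1/2)·((c² + 2V(x(γ) + ε·η(γ))/m)·t'(γ)² − (x'(γ) + ε·η'(γ))²) dγ vanishes. Then x''(γ) + (V'(x(γ))/m)·t'(γ)² = 0 for all γ ∈ (γ_i, γ_f). -/

import Mathlib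

/-!
Differentiating under the integral sign, criticality of an action `∫ L(s, q, q̇) ds` says that
`∫ (∂L/∂q · η + ∂L/∂q̇ · η̇) = 0` for every test function `η`. Replacing `∂L/∂q` by the derivative
of its primitive `P` and integrating by parts gives `∫ (∂L/∂q̇ - P) · η̇ = 0`. As the derivatives of
test functions are exactly the test functions of mean zero, the fundamental lemma of the calculus of
variations makes `∂L/∂q̇ - P` constant (du Bois-Reymond). Thus the momentum `∂L/∂q̇` is
differentiable with derivative `∂L/∂q`; for the world-line Lagrangian it is `-ẋ`.
-/

open MeasureTheory Set TopologicalSpace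
open scoped ContDiff Distributions Topology

section ParametricIntegral

variable {E Z : Type*} [NormedAddCommGroup E] [NormedSpace ℝ E]
  [NormedAddCommGroup Z] [NormedSpace ℝ Z]

lemma hasDerivAt_intervalIntegral_of_continuous {F F' : ℝ → ℝ → E} (hF : ∀ ε, Continuous (F ε))
    (hF' : Continuous (Function.uncurry F'))
    (hFF' : ∀ ε s, HasDerivAt (fun ε ↦ F ε s) (F' ε s) ε) (a b ε₀ : ℝ) :
    HasDerivAt (fun ε ↦ ∫ s in a..b, F ε s) (∫ s in a..b, F' ε₀ s) ε₀ := by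
  obtain ⟨C, hC⟩ := ((isCompact_closedBall ε₀ 1).prod (isCompact_uIcc (a := a) (b := b)))
    |>.exists_bound_of_continuousOn hF'.continuousOn
  have hF'ε₀ : Continuous (F' ε₀) := hF'.comp (Continuous.prodMk_right ε₀)
  exact (intervalIntegral.hasDerivAt_integral_of_dominated_loc_of_deriv_le
    (bound := fun _ ↦ C) (Metric.closedBall_mem_nhds ε₀ one_pos)
    (.of_forall fun ε ↦ (hF ε).aestronglyMeasurable) ((hF ε₀).intervalIntegrable a b)
    hF'ε₀.aestronglyMeasurable
    (.of_forall fun s hs ε hε ↦ hC (ε, s) ⟨hε, uIoc_subset_uIcc hs⟩)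
    intervalIntegrable_const (.of_forall fun s _ ε _ ↦ hFF' ε s)).2

theorem hasDerivAt_intervalIntegral_variation {L : ℝ → Z → E} {L' : ℝ → Z → Z →L[ℝ] E}
    (hL : Continuous (Function.uncurry L)) (hL' : Continuous (Function.uncurry L'))
    (hLL' : ∀ s z, HasFDerivAt (L s) (L' s z) z) {u w : ℝ → Z} (hu : Continuous u)
    (hw : Continuous w) (a b : ℝ) :
    HasDerivAt (fun ε : ℝ ↦ ∫ s in a..b, L s (u s + ε • w s))
      (∫ s in a..b, L' s (u s) (w s)) 0 := by
  have hline (ε s : ℝ) : HasDerivAt (fun ε : ℝ ↦ u s + ε • w s) (w s) ε := by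
    simpa using ((hasDerivAt_id ε).smul_const (w s)).const_add (u s)
  have hcont : Continuous fun p : ℝ × ℝ ↦ L' p.2 (u p.2 + p.1 • w p.2) :=
    hL'.comp (by fun_prop : Continuous fun p : ℝ × ℝ ↦ (p.2, u p.2 + p.1 • w p.2))
  simpa using hasDerivAt_intervalIntegral_of_continuous
    (F' := fun ε s ↦ L' s (u s + ε • w s) (w s))
    (fun ε ↦ hL.comp (by fun_prop : Continuous fun s ↦ (s, u s + ε • w s)))
    (hcont.clm_apply (hw.comp continuous_snd))
    (fun ε s ↦ (hLL' s _).comp_hasDerivAt ε (hline ε s)) a b 0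

end ParametricIntegral

section TestFunctions

variable {E F : Type*} [NormedAddCommGroup E] [NormedSpace ℝ E]
  [NormedAddCommGroup F] [NormedSpace ℝ F]

/-- The interval `(a, b)` bundled as an open set, so that `𝓓(openInterval a b, E)` is the space of
variations of a path that vanish near the endpoints. -/
def openInterval (a b : ℝ) : Opens ℝ := ⟨Ioo a b, isOpen_Ioo⟩

variable {a b : ℝ}

lemma exists_subset_Icc_of_isCompact_of_subset_Ioo {α : Type*} [LinearOrder α]
    [TopologicalSpace α] [ClosedIicTopology α] [ClosedIciTopology α] [NoMaxOrder α] [NoMinOrder α]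
    {K : Set α} {a b : α} (hK : IsCompact K) (hKab : K ⊆ Ioo a b) :
    ∃ c d, a < c ∧ d < b ∧ K ⊆ Icc c d := by
  rcases K.eq_empty_or_nonempty with rfl | hne
  · obtain ⟨c, hc⟩ := exists_gt a
    obtain ⟨d, hd⟩ := exists_lt b
    exact ⟨c, d, hc, hd, empty_subset _⟩
  · obtain ⟨c, hcK, hc⟩ := hK.exists_isLeast hne
    obtain ⟨d, hdK, hd⟩ := hK.exists_isGreatest hne
    exact ⟨c, d, (hKab hcK).1, (hKab hdK).2, fun y hy ↦ ⟨hc hy, hd hy⟩⟩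

lemma exists_testFunction_integral_eq_one [FiniteDimensional ℝ F] [MeasurableSpace F]
    [BorelSpace F] (μ : Measure F) [IsLocallyFiniteMeasure μ] [μ.IsOpenPosMeasure]
    {Ω : Opens F} (hΩ : (Ω : Set F).Nonempty) : ∃ ψ : 𝓓(Ω, ℝ), ∫ y, ψ y ∂μ = 1 := by
  obtain ⟨y, hy⟩ := hΩ
  obtain ⟨r, hr, hball⟩ := Metric.nhds_basis_closedBall.mem_iff.1 (Ω.isOpen.mem_nhds hy)
  let bump : ContDiffBump y := ⟨r / 2, r, half_pos hr, half_lt_self hr⟩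
  exact ⟨⟨bump.normed μ, bump.contDiff_normed, bump.hasCompactSupport_normed,
    bump.tsupport_normed_eq.trans_subset hball⟩, bump.integral_normed⟩

lemma testFunction_apply_eq_zero {Ω : Opens F} (φ : 𝓓(Ω, E)) {y : F} (hy : y ∉ Ω) : φ y = 0 :=
  image_eq_zero_of_notMem_tsupport fun h ↦ hy (φ.tsupport_subset h)

lemma intervalIntegral_testFunction_smul (φ : 𝓓(openInterval a b, ℝ)) (f : ℝ → E) :
    ∫ s in a..b, φ s • f s = ∫ s, φ s • f s :=
  intervalIntegral.integral_eq_integral_of_support_subset <|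
    (Function.support_smul_subset_left _ _).trans <|
      (subset_tsupport φ).trans <| φ.tsupport_subset.trans Ioo_subset_Ioc_self

lemma intervalIntegral_testFunction_sub_const_smul_smul (φ ψ : 𝓓(openInterval a b, ℝ)) (r : ℝ)
    {f : ℝ → E} (hf : Continuous f) :
    ∫ s in a..b, (φ - r • ψ) s • f s
      = (∫ s in a..b, φ s • f s) - r • ∫ s in a..b, ψ s • f s := by
  have hint (χ : 𝓓(openInterval a b, ℝ)) : IntervalIntegrable (fun s ↦ χ s • f s) volume a b :=
    (χ.continuous.smul hf).intervalIntegrable a b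
  calc ∫ s in a..b, (φ - r • ψ) s • f s
      = ∫ s in a..b, (φ s • f s - r • ψ s • f s) := by simp [sub_smul, mul_smul]
    _ = (∫ s in a..b, φ s • f s) - ∫ s in a..b, r • ψ s • f s :=
        intervalIntegral.integral_sub (hint φ) ((hint ψ).smul r)
    _ = (∫ s in a..b, φ s • f s) - r • ∫ s in a..b, ψ s • f s := by
        rw [intervalIntegral.integral_smul]

variable [CompleteSpace E]

lemma intervalIntegral_testFunction_smul_eq_neg_deriv_smul (η : 𝓓(openInterval a b, ℝ))
    {f f' : ℝ → E} (hf : ∀ s, HasDerivAt f (f' s) s) (hf' : Continuous f') :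
    ∫ s in a..b, η s • f' s = -∫ s in a..b, deriv η s • f s := by
  have hη' : Continuous (deriv η) := η.contDiff.continuous_deriv (by simp)
  have hηa : η a = 0 := testFunction_apply_eq_zero η fun h ↦ lt_irrefl a h.1
  have hηb : η b = 0 := testFunction_apply_eq_zero η fun h ↦ lt_irrefl b h.2
  rw [intervalIntegral.integral_smul_deriv_eq_deriv_smul
    (fun s _ ↦ (η.contDiff.differentiable (by simp) s).hasDerivAt) (fun s _ ↦ hf s)
    (hη'.intervalIntegrable a b) (hf'.intervalIntegrable a b), hηa, hηb]
  simp

theorem exists_testFunction_deriv_eq (φ : 𝓓(openInterval a b, E)) (hφ : ∫ s in a..b, φ s = 0) :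
    ∃ η : 𝓓(openInterval a b, E), deriv η = φ := by
  obtain ⟨c, d, hac, hdb, hφcd⟩ :=
    exists_subset_Icc_of_isCompact_of_subset_Ioo φ.hasCompactSupport.isCompact φ.tsupport_subset
  have hφ_zero {s : ℝ} (hs : s ∉ Icc c d) : φ s = 0 :=
    image_eq_zero_of_notMem_tsupport fun h ↦ hs (hφcd h)
  let η : ℝ → E := fun y ↦ ∫ s in a..y, φ s
  have hη (y : ℝ) : HasDerivAt η (φ y) y :=
    (φ.continuous.integral_hasStrictDerivAt a y).hasDerivAt
  have hη_deriv : deriv η = φ := funext fun y ↦ (hη y).deriv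
  have hη_smooth : ContDiff ℝ ∞ η :=
    contDiff_infty_iff_deriv.2 ⟨fun y ↦ (hη y).differentiableAt, hη_deriv ▸ φ.contDiff⟩
  have hη_left {y : ℝ} (hy : y < c) : η y = 0 :=
    intervalIntegral.integral_zero_ae <| .of_forall fun s hs ↦
      hφ_zero fun h ↦ (hs.2.trans_lt (max_lt hac hy)).not_ge h.1
  have hη_right {y : ℝ} (hy : d < y) : η y = 0 := by
    have htail : ∫ s in y..b, φ s = 0 :=
      intervalIntegral.integral_zero_ae <| .of_forall fun s hs ↦
        hφ_zero fun h ↦ ((lt_min hy hdb).trans hs.1).not_ge h.2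
    rw [← hφ, ← intervalIntegral.integral_add_adjacent_intervals
      (φ.continuous.intervalIntegrable a y) (φ.continuous.intervalIntegrable y b), htail, add_zero]
  have hη_supp : tsupport η ⊆ Icc c d := closure_minimal
    (fun y hy ↦ ⟨not_lt.1 fun h ↦ hy (hη_left h), not_lt.1 fun h ↦ hy (hη_right h)⟩) isClosed_Icc
  exact ⟨⟨η, hη_smooth, isCompact_Icc.of_isClosed_subset (isClosed_tsupport η) hη_supp,
    hη_supp.trans (Icc_subset_Ioo hac hdb)⟩, hη_deriv⟩

end TestFunctions

section CalculusOfVariations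

variable {E : Type*} [NormedAddCommGroup E] [NormedSpace ℝ E] [CompleteSpace E] {a b : ℝ}

lemma eqOn_zero_of_integral_testFunction_smul_eq_zero {f : ℝ → E} (hf : Continuous f)
    (h : ∀ φ : 𝓓(openInterval a b, ℝ), ∫ s in a..b, φ s • f s = 0) : EqOn f 0 (Ioo a b) := by
  have hae : ∀ᵐ s, s ∈ Ioo a b → f s = 0 :=
    isOpen_Ioo.ae_eq_zero_of_integral_contDiff_smul_eq_zero
      (hf.locallyIntegrable.locallyIntegrableOn _) fun φ hφ hφc hφs ↦
        (intervalIntegral_testFunction_smul ⟨φ, hφ, hφc, hφs⟩ f).symm.trans (h _)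
  exact Measure.eqOn_open_of_ae_eq ((ae_restrict_iff' measurableSet_Ioo).2 hae) isOpen_Ioo
    hf.continuousOn continuousOn_const

theorem exists_eqOn_const_of_integral_deriv_smul_eq_zero {g : ℝ → E} (hg : Continuous g)
    (h : ∀ η : 𝓓(openInterval a b, ℝ), ∫ s in a..b, deriv η s • g s = 0) :
    ∃ k, EqOn g (fun _ ↦ k) (Ioo a b) := by
  rcases (Ioo a b).eq_empty_or_nonempty with hempty | hne
  · exact ⟨0, by simp [hempty]⟩
  obtain ⟨ψ, hψ_line⟩ := exists_testFunction_integral_eq_one volume (Ω := openInterval a b) hne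
  have hψ : ∫ s in a..b, ψ s = 1 := by
    simpa [hψ_line] using intervalIntegral_testFunction_smul ψ fun _ ↦ (1 : ℝ)
  let k := ∫ s in a..b, ψ s • g s
  refine ⟨k, fun s hs ↦ sub_eq_zero.1 <| eqOn_zero_of_integral_testFunction_smul_eq_zero
    (f := fun s ↦ g s - k) (by fun_prop) (fun φ ↦ ?_) hs⟩
  let I := ∫ s in a..b, φ s
  have hmean : ∫ s in a..b, (φ - I • ψ) s = 0 := by
    simpa [hψ, I] using intervalIntegral_testFunction_sub_const_smul_smul φ ψ I
      (continuous_const (y := (1 : ℝ)))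
  obtain ⟨η, hη⟩ := exists_testFunction_deriv_eq (φ - I • ψ) hmean
  have hint {f : ℝ → E} (hf : Continuous f) : IntervalIntegrable (fun s ↦ φ s • f s) volume a b :=
    (φ.continuous.smul hf).intervalIntegrable a b
  calc ∫ s in a..b, φ s • (g s - k)
      = (∫ s in a..b, φ s • g s) - I • k := by
        simp only [smul_sub, intervalIntegral.integral_sub (hint hg) (hint continuous_const),
          intervalIntegral.integral_smul_const, I]
    _ = ∫ s in a..b, (φ - I • ψ) s • g s :=
        (intervalIntegral_testFunction_sub_const_smul_smul φ ψ I hg).symm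
    _ = 0 := hη ▸ h η

theorem hasDerivAt_of_integral_smul_add_deriv_smul_eq_zero {f p : ℝ → E} (hf : Continuous f)
    (hp : Continuous p)
    (h : ∀ η : 𝓓(openInterval a b, ℝ), ∫ s in a..b, (η s • f s + deriv η s • p s) = 0)
    {s : ℝ} (hs : s ∈ Ioo a b) : HasDerivAt p (f s) s := by
  let P : ℝ → E := fun y ↦ ∫ s in a..y, f s
  have hP (y : ℝ) : HasDerivAt P (f y) y := (hf.integral_hasStrictDerivAt a y).hasDerivAt
  have hPc : Continuous P := continuous_iff_continuousAt.2 fun y ↦ (hP y).continuousAt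
  obtain ⟨k, hk⟩ : ∃ k, EqOn (fun y ↦ p y - P y) (fun _ ↦ k) (Ioo a b) := by
    refine exists_eqOn_const_of_integral_deriv_smul_eq_zero (hp.sub hPc) fun η ↦ ?_
    have hη' : Continuous (deriv η) := η.contDiff.continuous_deriv (by simp)
    have hint {g : ℝ → E} (hg : Continuous g) :
        IntervalIntegrable (fun y ↦ deriv η y • g y) volume a b :=
      (hη'.smul hg).intervalIntegrable a b
    have hηf : IntervalIntegrable (fun y ↦ η y • f y) volume a b :=
      (η.continuous.smul hf).intervalIntegrable a b
    calc ∫ y in a..b, deriv η y • (p y - P y)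
        = (∫ y in a..b, deriv η y • p y) - ∫ y in a..b, deriv η y • P y := by
          simp only [smul_sub, intervalIntegral.integral_sub (hint hp) (hint hPc)]
      _ = ∫ y in a..b, (η y • f y + deriv η y • p y) := by
          rw [intervalIntegral.integral_add hηf (hint hp),
            intervalIntegral_testFunction_smul_eq_neg_deriv_smul η hP hf, neg_add_eq_sub]
      _ = 0 := h η
  have hpP : p =ᶠ[𝓝 s] fun y ↦ P y + k := by
    filter_upwards [isOpen_Ioo.mem_nhds hs] with y hy
    exact sub_eq_iff_eq_add'.1 (hk hy)
  exact ((hP s).add_const k).congr_of_eventuallyEq hpP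

theorem hasDerivAt_momentum_of_deriv_action_eq_zero {L : ℝ → ℝ × ℝ → E}
    {L' : ℝ → ℝ × ℝ → ℝ × ℝ →L[ℝ] E}
    (hL : Continuous (Function.uncurry L)) (hL' : Continuous (Function.uncurry L'))
    (hLL' : ∀ s z, HasFDerivAt (L s) (L' s z) z) {q : ℝ → ℝ} (hq : ContDiff ℝ 1 q)
    (hcrit : ∀ η : 𝓓(openInterval a b, ℝ),
      deriv (fun ε : ℝ ↦ ∫ s in a..b, L s (q s + ε * η s, deriv q s + ε * deriv η s)) 0 = 0)
    {s : ℝ} (hs : s ∈ Ioo a b) :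
    HasDerivAt (fun s ↦ L' s (q s, deriv q s) (0, 1)) (L' s (q s, deriv q s) (1, 0)) s := by
  have hjet : Continuous fun s ↦ (q s, deriv q s) :=
    hq.continuous.prodMk (hq.continuous_deriv le_rfl)
  have hL'jet : Continuous fun s ↦ L' s (q s, deriv q s) := hL'.comp (continuous_id.prodMk hjet)
  refine hasDerivAt_of_integral_smul_add_deriv_smul_eq_zero
    (f := fun s ↦ L' s (q s, deriv q s) (1, 0)) (hL'jet.clm_apply continuous_const)
    (hL'jet.clm_apply continuous_const) (fun η ↦ ?_) hs
  have hvariation := hasDerivAt_intervalIntegral_variation hL hL' hLL' hjet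
    (η.continuous.prodMk (η.contDiff.continuous_deriv (by simp))) a b
  calc ∫ s in a..b,
        (η s • L' s (q s, deriv q s) (1, 0) + deriv η s • L' s (q s, deriv q s) (0, 1))
      = ∫ s in a..b, L' s (q s, deriv q s) (η s, deriv η s) := by
        simp only [← map_smul, ← map_add, Prod.smul_mk, Prod.mk_add_mk, smul_eq_mul, mul_one,
          mul_zero, add_zero, zero_add]
    _ = 0 := hvariation.deriv.symm.trans (hcrit η)

end CalculusOfVariations

/-- The integrand of the world-line action as a function of `z = (x, ẋ)`, where `v` stands for `ṫ`
and `Φ = V / m` is the potential energy per unit mass. -/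
noncomputable def worldLineLagrangian (c : ℝ) (Φ : ℝ → ℝ) (v : ℝ) (z : ℝ × ℝ) : ℝ :=
  (1 / 2 : ℝ) * ((c ^ 2 + 2 * Φ z.1) * v ^ 2 - z.2 ^ 2)

lemma hasFDerivAt_worldLineLagrangian {Φ : ℝ → ℝ} (hΦ : Differentiable ℝ Φ) (c v : ℝ)
    (z : ℝ × ℝ) :
    HasFDerivAt (worldLineLagrangian c Φ v)
      ((deriv Φ z.1 * v ^ 2) • ContinuousLinearMap.fst ℝ ℝ ℝ
        - z.2 • ContinuousLinearMap.snd ℝ ℝ ℝ) z := by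
  have hpotential : HasFDerivAt (fun z : ℝ × ℝ ↦ Φ z.1)
      (deriv Φ z.1 • ContinuousLinearMap.fst ℝ ℝ ℝ) z :=
    (hΦ z.1).hasDerivAt.comp_hasFDerivAt z hasFDerivAt_fst
  refine (((((hpotential.const_mul 2).const_add (c ^ 2)).mul_const (v ^ 2)).sub
    (hasFDerivAt_snd.pow 2)).const_mul (1 / 2)).congr_fderiv ?_
  ext <;> simp
  ring

theorem euler_lagrange_space_coordinate_general {γi γf : ℝ} {t x Φ : ℝ → ℝ}
    (ht : ContDiff ℝ 1 t) (hx : ContDiff ℝ 1 x) (hΦ : ContDiff ℝ 1 Φ) (c : ℝ)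
    (hcrit : ∀ η : ℝ → ℝ, ContDiff ℝ ∞ η → HasCompactSupport η → tsupport η ⊆ Ioo γi γf →
      deriv (fun ε : ℝ ↦ ∫ γ in γi..γf, (1 / 2 : ℝ) *
        ((c ^ 2 + 2 * Φ (x γ + ε * η γ)) * deriv t γ ^ 2
          - (deriv x γ + ε * deriv η γ) ^ 2)) 0 = 0)
    {γ : ℝ} (hγ : γ ∈ Ioo γi γf) :
    HasDerivAt (deriv x) (-(deriv Φ (x γ) * deriv t γ ^ 2)) γ := by
  have hmomentum := hasDerivAt_momentum_of_deriv_action_eq_zero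
    (L := fun s ↦ worldLineLagrangian c Φ (deriv t s))
    (by unfold Function.uncurry worldLineLagrangian; fun_prop)
    (by unfold Function.uncurry; fun_prop)
    (fun s z ↦ hasFDerivAt_worldLineLagrangian (hΦ.differentiable one_ne_zero) c (deriv t s) z)
    hx (fun η ↦ hcrit η η.contDiff η.hasCompactSupport η.tsupport_subset) hγ
  simpa using hmomentum.fun_neg

/-- Euler–Lagrange (spatial geodesic) equation from criticality: if the first
variation of the world-line action in the space coordinate vanishes for every
smooth variation `η` compactly supported in the open interval `(γi, γf)`, then
`ẍ(γ) + (V'(x(γ))/m)·ṫ(γ)² = 0` on `(γi, γf)`. -/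
theorem euler_lagrange_space_coordinate
    (γi γf : ℝ) (t x : ℝ → ℝ)
    (ht : ContDiff ℝ 2 t) (hx : ContDiff ℝ 2 x)
    (V : ℝ → ℝ) (hV : ContDiff ℝ 1 V) (c m : ℝ) (hm : m ≠ 0)
    (hcrit : ∀ η : ℝ → ℝ, ContDiff ℝ (⊤ : ℕ∞) η → HasCompactSupport η →
      tsupport η ⊆ Set.Ioo γi γf →
      deriv (fun ε : ℝ => ∫ γ in γi..γf, (1/2 : ℝ) *
        ((c^2 + 2 * V (x γ + ε * η γ) / m) * (deriv t γ)^2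
          - (deriv x γ + ε * deriv η γ)^2)) 0 = 0) :
    ∀ γ ∈ Set.Ioo γi γf,
      deriv (deriv x) γ + (deriv V (x γ) / m) * (deriv t γ)^2 = 0 := by
  intro γ hγ
  have hddx := euler_lagrange_space_coordinate_general (ht.of_le one_le_two) (hx.of_le one_le_two)
    (hV.div_const m) c (by simpa only [mul_div_assoc] using hcrit) hγ
  rw [hddx.deriv, deriv_div_const, neg_add_cancel]
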